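/- Let S_1 be a homogeneous numerical semigroup minimally generated by m_1 < … < m_d, let q ≥ 2 be an integer and p ∈ S_1 with gcd(p,q) = 1 and p ∉ {m_1,…,m_d}, and let S = ⟨q m_1,…,q m_d, p⟩ be the corresponding extension of S_1. Then AP(S, q m_1) is a homogeneous subset of S (equivalently, S is homogeneous) if and only if q = ord_{S_1}(p) or p ∉ AP(S_1, m_1). -/

import Mathlib

open scoped BigOperators

/-- The value `Σ aᵢ nᵢ` of a tuple of coefficients `a` w.r.t. the generators `n`. -/
def sval {d : ℕ} (n : Fin d → ℕ) (a : Fin d → ℕ) : ℕ := ∑ i, a i * n i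

/-- The total length `Σ aᵢ` of a factorization. -/
def tlen {d : ℕ} (a : Fin d → ℕ) : ℕ := ∑ i, a i

/-- The submonoid of `ℕ` generated by `n`. -/
def gen {d : ℕ} (n : Fin d → ℕ) : Set ℕ := {s : ℕ | ∃ a : Fin d → ℕ, s = sval n a}

/-- The Apéry set of the semigroup generated by `n` with respect to `s`:
elements `x` of the semigroup such that `x - s` is not in the semigroup. -/
def Apery {d : ℕ} (n : Fin d → ℕ) (s : ℕ) : Set ℕ :=
  {x : ℕ | x ∈ gen n ∧ ¬ ∃ y ∈ gen n, x = s + y}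

/-- A subset `T` is homogeneous if every nonzero element of `T` has all its
factorizations of the same length. -/
def HomogSet {d : ℕ} (n : Fin d → ℕ) (T : Set ℕ) : Prop :=
  ∀ t ∈ T, t ≠ 0 → ∀ a b : Fin d → ℕ, sval n a = t → sval n b = t → tlen a = tlen b

/-- The order of `s`: the maximal length of a factorization of `s`. -/
noncomputable def ordS {d : ℕ} (n : Fin d → ℕ) (s : ℕ) : ℕ :=
  sSup {l : ℕ | ∃ a : Fin d → ℕ, sval n a = s ∧ tlen a = l}

/-- The torsion set of the semigroup generated by `n`, with respect to the
generator of index `i0` (the smallest generator). -/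
noncomputable def Torsion {d : ℕ} (n : Fin d → ℕ) (i0 : Fin d) : Set ℕ :=
  {s : ℕ | s ∈ gen n ∧ ∃ c : ℕ, 0 < c ∧ ordS n s + c < ordS n (s + c * n i0)}

/-- `n` is a minimal system of generators: any expression of a generator as a
nonnegative combination of the generators has total coefficient sum one. -/
def MinGen {d : ℕ} (n : Fin d → ℕ) : Prop :=
  ∀ r : Fin d, ∀ a : Fin d → ℕ, n r = sval n a → tlen a = 1

/-- `n` generates a numerical semigroup (cofinite in `ℕ`). -/
def IsNumerical {d : ℕ} (n : Fin d → ℕ) : Prop := {x : ℕ | x ∉ gen n}.Finite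

/-- The monomial `x^a = Π xᵢ^{aᵢ}`. -/
noncomputable def monom (k : Type*) [CommRing k] {d : ℕ} (a : Fin d → ℕ) :
    MvPolynomial (Fin d) k :=
  ∏ i, (MvPolynomial.X i : MvPolynomial (Fin d) k) ^ a i

/-- The toric ideal `I_S`: kernel of `k[x₁,…,x_d] → k[t]`, `xᵢ ↦ t^{nᵢ}`. -/
noncomputable def toricIdeal (k : Type*) [CommRing k] {d : ℕ} (n : Fin d → ℕ) :
    Ideal (MvPolynomial (Fin d) k) :=
  RingHom.ker (MvPolynomial.aeval (R := k)
    (fun i => (Polynomial.X : Polynomial k) ^ n i)).toRingHom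

/-- `E` is a minimal generating set of the ideal `I`: it spans `I` and no
proper subset spans `I`. -/
def IsMinGenSet {R : Type*} [CommRing R] (I : Ideal R) (E : Set R) : Prop :=
  Ideal.span E = I ∧ ∀ E' : Set R, E' ⊂ E → Ideal.span E' ≠ I

/-- Membership of an integer in the semigroup generated by `n`. -/
def memZ {d : ℕ} (n : Fin d → ℕ) (z : ℤ) : Prop := ∃ x ∈ gen n, (x : ℤ) = z

/-- A numerical semigroup with Frobenius number `F = max (ℤ ∖ S)` is symmetric
if for every integer `z`, `z ∈ S ↔ F - z ∉ S`. -/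
def IsSymmetric {d : ℕ} (n : Fin d → ℕ) : Prop :=
  ∃ F : ℤ, ¬ memZ n F ∧ (∀ z : ℤ, F < z → memZ n z) ∧
    ∀ z : ℤ, memZ n z ↔ ¬ memZ n (F - z)

/-- A numerical semigroup with Frobenius number `F = max (ℤ ∖ S)` is
pseudo-symmetric if `F` is even and for every integer `z`,
`z ∈ S ↔ (z ≠ F/2 ∧ F - z ∉ S)`. -/
def IsPseudoSymmetric {d : ℕ} (n : Fin d → ℕ) : Prop :=
  ∃ F : ℤ, ¬ memZ n F ∧ (∀ z : ℤ, F < z → memZ n z) ∧ F % 2 = 0 ∧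
    ∀ z : ℤ, memZ n z ↔ (z ≠ F / 2 ∧ ¬ memZ n (F - z))

/-- The generators `q·m₁,…,q·m_d, p·n₁,…,p·n_e` of the gluing of two numerical
semigroups. -/
def glueGen {d e : ℕ} (mg : Fin d → ℕ) (ng : Fin e → ℕ) (p q : ℕ) :
    Fin (d + e) → ℕ :=
  Fin.append (fun i => q * mg i) (fun i => p * ng i)

theorem sval_snoc_aux {d : ℕ} (mg : Fin d → ℕ) (p q : ℕ) (a : Fin d → ℕ) (k : ℕ) :
    sval (Fin.snoc (fun i => q * mg i) p) (Fin.snoc a k : Fin (d + 1) → ℕ)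
      = q * sval mg a + k * p := by
  simp only [sval, Fin.sum_univ_castSucc, Fin.snoc_castSucc, Fin.snoc_last, Finset.mul_sum]
  congr 1
  exact Finset.sum_congr rfl fun i _ => by ring

theorem tlen_snoc_aux {d : ℕ} (a : Fin d → ℕ) (k : ℕ) :
    tlen (Fin.snoc a k : Fin (d + 1) → ℕ) = tlen a + k := by
  simp only [tlen, Fin.sum_univ_castSucc, Fin.snoc_castSucc, Fin.snoc_last]

theorem sval_add_aux {d : ℕ} (n a b : Fin d → ℕ) :
    sval n (a + b) = sval n a + sval n b := by
  simp [sval, add_mul, Finset.sum_add_distrib]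

theorem tlen_add_aux {d : ℕ} (a b : Fin d → ℕ) :
    tlen (a + b) = tlen a + tlen b := by
  simp [tlen, Finset.sum_add_distrib]

theorem sval_smul_aux {d : ℕ} (n a : Fin d → ℕ) (j : ℕ) :
    sval n (fun i => j * a i) = j * sval n a := by
  simp [sval, mul_assoc, Finset.mul_sum]

theorem tlen_smul_aux {d : ℕ} (a : Fin d → ℕ) (j : ℕ) :
    tlen (fun i => j * a i) = j * tlen a := by
  simp [tlen, Finset.mul_sum]

theorem mem_gen_snoc_aux {d : ℕ} (mg : Fin d → ℕ) (p q x : ℕ) :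
    x ∈ gen (Fin.snoc (fun i => q * mg i) p : Fin (d + 1) → ℕ) ↔
      ∃ s ∈ gen mg, ∃ k, x = q * s + k * p := by
  constructor
  · rintro ⟨a, rfl⟩
    refine ⟨sval mg (Fin.init a), ⟨_, rfl⟩, a (Fin.last d), ?_⟩
    rw [← sval_snoc_aux, Fin.snoc_init_self]
  · rintro ⟨s, ⟨a, rfl⟩, k, rfl⟩
    exact ⟨Fin.snoc a k, (sval_snoc_aux mg p q a k).symm⟩

theorem homog_core_aux {d : ℕ} (mg : Fin d → ℕ) (m p q : ℕ) (hq : 2 ≤ q)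
    (hH : ∀ a b : Fin d → ℕ, sval mg a = sval mg b → sval mg a ∈ Apery mg m →
      tlen a = tlen b)
    (c : Fin d → ℕ) (hc : p = sval mg c) (hcop : Nat.Coprime p q)
    (hor : q = tlen c ∨ p ∉ Apery mg m)
    (a b : Fin d → ℕ) (k j : ℕ)
    (hab : sval mg a = sval mg b + j * p)
    (hA : sval mg a ∈ Apery mg m) :
    tlen a + k = tlen b + (k + j * q) := by
  rcases Nat.eq_zero_or_pos j with rfl | hj
  · have := hH a b (by simpa using hab) hA
    omega
  · rcases hor with h | h
    · have := hH a (b + fun i => j * c i) (by rw [sval_add_aux, sval_smul_aux, ← hc, hab]) hA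
      rw [tlen_add_aux, tlen_smul_aux, ← h] at this
      omega
    · exfalso
      apply h
      refine ⟨⟨c, hc⟩, ?_⟩
      rintro ⟨y, ⟨e, rfl⟩, hy⟩
      apply hA.2
      obtain ⟨i, rfl⟩ : ∃ i, j = i + 1 := ⟨j - 1, by omega⟩
      refine ⟨sval mg (b + e + fun t => i * c t), ⟨_, rfl⟩, ?_⟩
      rw [hab, sval_add_aux, sval_add_aux, sval_smul_aux, ← hc, add_mul, one_mul]
      omega

theorem split_aux {p q A B k l : ℕ} (hq : 2 ≤ q) (hcop : Nat.Coprime p q)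
    (hkl : k ≤ l) (h : q * A + k * p = q * B + l * p) :
    ∃ j, l = k + j * q ∧ A = B + j * p := by
  obtain ⟨r, rfl⟩ := Nat.exists_eq_add_of_le hkl
  have h1 : q * A = q * B + r * p := by nlinarith
  have h2 : q ∣ r * p := (Nat.dvd_add_right (Dvd.intro _ rfl)).1 (h1 ▸ Dvd.intro _ rfl)
  obtain ⟨j, rfl⟩ := hcop.symm.dvd_of_dvd_mul_right h2
  refine ⟨j, by ring, ?_⟩
  apply Nat.eq_of_mul_eq_mul_left (show 0 < q by omega)
  rw [h1]; ring

/-- an extension `S = ⟨q·m₁,…,q·m_d, p⟩` of a homogeneous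
numerical semigroup `S₁` is homogeneous iff `q = ord_{S₁}(p)` or
`p ∉ AP(S₁,m₁)`. -/
theorem statement16 {d : ℕ} (hd : 0 < d)
    (mg : Fin d → ℕ) (hmmono : StrictMono mg) (hmpos : 0 < mg ⟨0, hd⟩)
    (hmnum : IsNumerical mg) (hmmin : MinGen mg)
    (hhomog : HomogSet mg (Apery mg (mg ⟨0, hd⟩)))
    (p q : ℕ) (hq : 2 ≤ q) (hp : p ∈ gen mg) (hcop : Nat.Coprime p q)
    (hpn : p ∉ Set.range mg) :
    HomogSet (Fin.snoc (fun i => q * mg i) p)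
        (Apery (Fin.snoc (fun i => q * mg i) p) (q * mg ⟨0, hd⟩)) ↔
      (q = ordS mg p ∨ p ∉ Apery mg (mg ⟨0, hd⟩)) := by
  have hpos : ∀ i, 0 < mg i := fun i =>
    lt_of_lt_of_le hmpos (hmmono.monotone (Fin.mk_le_of_le_val (Nat.zero_le _)))
  generalize hm : mg ⟨0, hd⟩ = m at *
  have hp0 : p ≠ 0 := by
    rintro rfl
    rw [Nat.coprime_zero_left] at hcop
    omega
  have hz : ∀ a : Fin d → ℕ, sval mg a = 0 → tlen a = 0 := by
    intro a ha
    simp only [sval, tlen, Finset.sum_eq_zero_iff] at *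
    intro i hi
    rcases Nat.mul_eq_zero.1 (ha i hi) with h | h
    · exact h
    · exact absurd h (hpos i).ne'
  have hH : ∀ a b : Fin d → ℕ, sval mg a = sval mg b → sval mg a ∈ Apery mg m →
      tlen a = tlen b := by
    intro a b hab hA
    by_cases h0 : sval mg a = 0
    · rw [hz a h0, hz b (hab ▸ h0)]
    · exact hhomog _ hA h0 a b rfl hab.symm
  obtain ⟨c, hc⟩ := hp
  have hord : (∀ a : Fin d → ℕ, sval mg a = p → tlen a = tlen c) → ordS mg p = tlen c := by
    intro h
    have : {l : ℕ | ∃ a : Fin d → ℕ, sval mg a = p ∧ tlen a = l} = {tlen c} := by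
      ext l
      constructor
      · rintro ⟨a, ha, rfl⟩
        exact h a ha
      · rintro rfl
        exact ⟨c, hc.symm, rfl⟩
    rw [ordS, this, csSup_singleton]
  have hordA : p ∈ Apery mg m → ordS mg p = tlen c := fun hA =>
    hord fun a ha => hH a c (ha.trans hc) (ha ▸ hA)
  constructor
  · intro hS
    by_cases hA : p ∈ Apery mg m
    · left
      rw [hordA hA]
      have key := hS (q * p) ?_ (Nat.mul_ne_zero (by omega) hp0)
        (Fin.snoc c 0) (Fin.snoc (fun i => 0 * c i) q)
        (by rw [sval_snoc_aux, ← hc]; simp)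
        (by rw [sval_snoc_aux, sval_smul_aux]; simp)
      · rw [tlen_snoc_aux, tlen_snoc_aux, tlen_smul_aux] at key
        omega
      · refine ⟨(mem_gen_snoc_aux _ _ _ _).2 ⟨p, ⟨c, hc⟩, 0, by ring⟩, ?_⟩
        rintro ⟨y, hy, hyq⟩
        obtain ⟨B, hB, l, rfl⟩ := (mem_gen_snoc_aux _ _ _ _).1 hy
        obtain ⟨j, hj, hj2⟩ := split_aux (A := p) (B := m + B) (k := 0) (l := l) hq hcop
          (Nat.zero_le _) (by rw [hyq]; ring)
        rcases Nat.eq_zero_or_pos j with rfl | hjp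
        · exact hA.2 ⟨B, hB, by simpa using hj2⟩
        · have := Nat.le_mul_of_pos_left p hjp
          omega
    · exact Or.inr hA
  · intro hor
    have hor' : q = tlen c ∨ p ∉ Apery mg m := by
      by_cases hA : p ∈ Apery mg m
      · rw [hordA hA] at hor
        exact hor
      · exact Or.inr hA
    -- the first component of a factorization of an Apery element is in the Apery set
    have hin : ∀ (a : Fin d → ℕ) (k : ℕ), q * sval mg a + k * p ∈
        Apery (Fin.snoc (fun i => q * mg i) p : Fin (d + 1) → ℕ) (q * m) →
        sval mg a ∈ Apery mg m := by
      intro a k h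
      refine ⟨⟨a, rfl⟩, ?_⟩
      rintro ⟨y, hy, hay⟩
      exact h.2 ⟨q * y + k * p, (mem_gen_snoc_aux _ _ _ _).2 ⟨y, hy, k, rfl⟩, by rw [hay]; ring⟩
    have main : ∀ (a b : Fin d → ℕ) (k l : ℕ), k ≤ l →
        q * sval mg a + k * p = q * sval mg b + l * p →
        q * sval mg a + k * p ∈
          Apery (Fin.snoc (fun i => q * mg i) p : Fin (d + 1) → ℕ) (q * m) →
        tlen a + k = tlen b + l := by
      intro a b k l hkl h hA
      obtain ⟨j, rfl, hj⟩ := split_aux hq hcop hkl h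
      exact homog_core_aux mg m p q hq hH c hc hcop hor' a b k j hj (hin a k hA)
    intro t ht _ a b ha hb
    rw [← Fin.snoc_init_self a, sval_snoc_aux] at ha
    rw [← Fin.snoc_init_self b, sval_snoc_aux] at hb
    rw [← Fin.snoc_init_self a, ← Fin.snoc_init_self b, tlen_snoc_aux, tlen_snoc_aux]
    rcases le_total (a (Fin.last d)) (b (Fin.last d)) with h | h
    · exact main _ _ _ _ h (ha.trans hb.symm) (ha ▸ ht)
    · exact (main _ _ _ _ h (hb.trans ha.symm) (hb ▸ ht)).symm
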